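/- There exists an absolute constant c > 0 such that for every n ∈ ℕ, every f : {0,1}^n → {0,1} with var(f) > 0, and every 2-coloring col of the edges of the hypercube into red and blue, Talagrand_col(f) ≥ c·var(f)·√(log(1 + 1/(Σ_{i=1}^n I_i[f]²))). -/

import Mathlib

open Finset

noncomputable section

/-- Expectation over the uniform distribution on `{0,1}^n`. -/
def hcExp (n : ℕ) (g : (Fin n → Bool) → ℝ) : ℝ :=
  (∑ x : Fin n → Bool, g x) / 2 ^ n

/-- Flip the `i`-th coordinate of `x`. -/
def hcFlip {n : ℕ} (x : Fin n → Bool) (i : Fin n) : Fin n → Bool :=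
  Function.update x i (!(x i))

/-- Sensitivity of `f` at `x`. -/
def sens {n : ℕ} (f : (Fin n → Bool) → Bool) (x : Fin n → Bool) : ℕ :=
  (Finset.univ.filter fun i => f (hcFlip x i) ≠ f x).card

/-- `f` with values in `{0,1} ⊆ ℝ`. -/
def toReal {n : ℕ} (f : (Fin n → Bool) → Bool) : (Fin n → Bool) → ℝ :=
  fun x => if f x then 1 else 0

/-- Variance of a Boolean function. -/
def hcVar (n : ℕ) (f : (Fin n → Bool) → Bool) : ℝ :=
  hcExp n (toReal f) - (hcExp n (toReal f)) ^ 2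

/-- Influence of coordinate `i`. -/
def influence (n : ℕ) (f : (Fin n → Bool) → Bool) (i : Fin n) : ℝ :=
  hcExp n (fun x => if f (hcFlip x i) = f x then 0 else 1)

/-- Fourier character. -/
def chi {n : ℕ} (S : Finset (Fin n)) (x : Fin n → Bool) : ℝ :=
  ∏ i ∈ S, (if x i then (-1 : ℝ) else 1)

/-- Fourier coefficient of `g` at `S`. -/
def fcoef (n : ℕ) (g : (Fin n → Bool) → ℝ) (S : Finset (Fin n)) : ℝ :=
  hcExp n (fun x => g x * chi S x)

/-- Derivative of `g` along coordinate `i`. -/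
def derivOn {n : ℕ} (g : (Fin n → Bool) → ℝ) (i : Fin n) (x : Fin n → Bool) : ℝ :=
  g (Function.update x i false) - g (Function.update x i true)

/-- Euclidean norm of the gradient of `g` at `x`. -/
def gradNorm2 {n : ℕ} (g : (Fin n → Bool) → ℝ) (x : Fin n → Bool) : ℝ :=
  Real.sqrt (∑ i, (derivOn g i x) ^ 2)

/-- `ℓ_p` norm of the gradient of `g` at `x`. -/
def gradNormP {n : ℕ} (p : ℝ) (g : (Fin n → Bool) → ℝ) (x : Fin n → Bool) : ℝ :=
  (∑ i, |derivOn g i x| ^ p) ^ (1 / p)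

/-- Fourier weight at exactly level `d`. -/
def wEq (n : ℕ) (g : (Fin n → Bool) → ℝ) (d : ℕ) : ℝ :=
  ∑ S ∈ Finset.univ.filter (fun S : Finset (Fin n) => S.card = d), (fcoef n g S) ^ 2

/-- Approximate level-`d` Fourier weight: levels in `[d, 2d)`. -/
def wApprox (n : ℕ) (g : (Fin n → Bool) → ℝ) (d : ℕ) : ℝ :=
  ∑ S ∈ Finset.univ.filter (fun S : Finset (Fin n) => d ≤ S.card ∧ S.card < 2 * d),
    (fcoef n g S) ^ 2

/-- Fourier weight at levels `≥ d`. -/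
def wGe (n : ℕ) (g : (Fin n → Bool) → ℝ) (d : ℕ) : ℝ :=
  ∑ S ∈ Finset.univ.filter (fun S : Finset (Fin n) => d ≤ S.card), (fcoef n g S) ^ 2


/-- Number of red sensitive edges at `x` counted when `f x = 1` (red sensitivity).
Here a coloring `col : (Fin n → Bool) → Fin n → Bool` gives the color (`true` = red,
`false` = blue) of the edge `(x, x ⊕ eᵢ)`. -/
def sRed {n : ℕ} (f : (Fin n → Bool) → Bool) (col : (Fin n → Bool) → Fin n → Bool)
    (x : Fin n → Bool) : ℕ :=
  if f x then
    (Finset.univ.filter fun i => f (hcFlip x i) ≠ f x ∧ col x i = true).card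
  else 0

/-- Blue sensitivity: counted when `f x = 0`. -/
def sBlue {n : ℕ} (f : (Fin n → Bool) → Bool) (col : (Fin n → Bool) → Fin n → Bool)
    (x : Fin n → Bool) : ℕ :=
  if f x then 0
  else (Finset.univ.filter fun i => f (hcFlip x i) ≠ f x ∧ col x i = false).card

/-- The Talagrand boundary with respect to the coloring `col`. -/
def talagrandCol {n : ℕ} (f : (Fin n → Bool) → Bool)
    (col : (Fin n → Bool) → Fin n → Bool) : ℝ :=
  hcExp n (fun x => Real.sqrt (sRed f col x)) + hcExp n (fun x => Real.sqrt (sBlue f col x))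

/-- The coloring is symmetric: the two endpoints of an edge see the same color. -/
def colSymm {n : ℕ} (col : (Fin n → Bool) → Fin n → Bool) : Prop :=
  ∀ (x : Fin n → Bool) (i : Fin n), col (hcFlip x i) i = col x i

lemma E_add {n : ℕ} (f g : (Fin n → Bool) → ℝ) :
    hcExp n (fun x => f x + g x) = hcExp n f + hcExp n g := by
  simp only [hcExp, Finset.sum_add_distrib, add_div]

lemma E_sub {n : ℕ} (f g : (Fin n → Bool) → ℝ) :
    hcExp n (fun x => f x - g x) = hcExp n f - hcExp n g := by
  simp only [hcExp, Finset.sum_sub_distrib, sub_div]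

lemma E_mul {n : ℕ} (c : ℝ) (f : (Fin n → Bool) → ℝ) :
    hcExp n (fun x => c * f x) = c * hcExp n f := by
  simp only [hcExp, ← Finset.mul_sum, mul_div_assoc]

lemma E_sum {n : ℕ} {ι : Type*} (s : Finset ι) (f : ι → (Fin n → Bool) → ℝ) :
    hcExp n (fun x => ∑ i ∈ s, f i x) = ∑ i ∈ s, hcExp n (f i) := by
  simp only [hcExp]
  rw [Finset.sum_comm, Finset.sum_div]

lemma E_mono {n : ℕ} {f g : (Fin n → Bool) → ℝ} (h : ∀ x, f x ≤ g x) :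
    hcExp n f ≤ hcExp n g := by
  unfold hcExp
  exact div_le_div_of_nonneg_right (Finset.sum_le_sum fun x _ => h x) (by positivity)

lemma E_const {n : ℕ} (c : ℝ) : hcExp n (fun _ => c) = c := by
  simp [hcExp]

lemma E_nonneg {n : ℕ} {f : (Fin n → Bool) → ℝ} (h : ∀ x, 0 ≤ f x) : 0 ≤ hcExp n f := by
  unfold hcExp
  exact div_nonneg (Finset.sum_nonneg fun x _ => h x) (by positivity)

lemma E_abs {n : ℕ} (f : (Fin n → Bool) → ℝ) : |hcExp n f| ≤ hcExp n (fun x => |f x|) := by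
  unfold hcExp
  rw [abs_div, abs_of_pos (by positivity : (0:ℝ) < 2 ^ n)]
  exact div_le_div_of_nonneg_right (Finset.abs_sum_le_sum_abs _ _) (by positivity)

lemma E_cs {n : ℕ} (f g : (Fin n → Bool) → ℝ) :
    (hcExp n (fun x => f x * g x)) ^ 2 ≤ hcExp n (fun x => f x ^ 2) * hcExp n (fun x => g x ^ 2) := by
  unfold hcExp
  rw [div_pow, div_mul_div_comm, ← sq]
  exact div_le_div_of_nonneg_right (Finset.sum_mul_sq_le_sq_mul_sq _ _ _) (by positivity)

lemma hcFlip_flip {n : ℕ} (x : Fin n → Bool) (i : Fin n) : hcFlip (hcFlip x i) i = x := by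
  simp [hcFlip]

lemma E_flip {n : ℕ} (i : Fin n) (f : (Fin n → Bool) → ℝ) :
    hcExp n (fun x => f (hcFlip x i)) = hcExp n f := by
  unfold hcExp
  congr 1
  exact Equiv.sum_comp (Function.Involutive.toPerm (fun x => hcFlip x i) (fun x => hcFlip_flip x i)) f

lemma E_odd {n : ℕ} (i : Fin n) (f : (Fin n → Bool) → ℝ) (h : ∀ x, f (hcFlip x i) = - f x) :
    hcExp n f = 0 := by
  have h1 := E_flip i f
  simp only [h] at h1
  have h2 := E_mul (-1) f
  simp only [neg_mul, one_mul] at h2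
  linarith

lemma chi_flip {n : ℕ} (S : Finset (Fin n)) (x : Fin n → Bool) (i : Fin n) :
    chi S (hcFlip x i) = if i ∈ S then - chi S x else chi S x := by
  unfold chi hcFlip
  split_ifs with h
  · rw [← Finset.mul_prod_erase _ _ h, ← Finset.mul_prod_erase _ _ h]
    have : ∏ k ∈ S.erase i, (if Function.update x i (!x i) k = true then (-1:ℝ) else 1)
        = ∏ k ∈ S.erase i, (if x k = true then (-1:ℝ) else 1) := by
      refine Finset.prod_congr rfl fun k hk => ?_
      rw [Function.update_of_ne (Finset.ne_of_mem_erase hk)]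
    rw [this]
    cases x i <;> simp
  · refine Finset.prod_congr rfl fun k hk => ?_
    rw [Function.update_of_ne (by rintro rfl; exact h hk)]

lemma chi_sq {n : ℕ} (S : Finset (Fin n)) (x : Fin n → Bool) : chi S x * chi S x = 1 := by
  unfold chi
  rw [← Finset.prod_mul_distrib]
  refine Finset.prod_eq_one fun i _ => ?_
  split_ifs <;> norm_num

lemma chi_abs {n : ℕ} (S : Finset (Fin n)) (x : Fin n → Bool) : |chi S x| = 1 := by
  have h := chi_sq S x
  rw [← abs_mul_abs_self] at h
  nlinarith [abs_nonneg (chi S x)]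

lemma chi_sum {n : ℕ} (x y : Fin n → Bool) :
    ∑ S : Finset (Fin n), chi S x * chi S y = if x = y then 2 ^ n else 0 := by
  have h1 : ∑ S : Finset (Fin n), chi S x * chi S y =
      ∏ i : Fin n, (1 + (if x i then (-1 : ℝ) else 1) * (if y i then (-1 : ℝ) else 1)) := by
    rw [Finset.prod_one_add, Finset.powerset_univ]
    refine Finset.sum_congr rfl fun S _ => ?_
    simp only [chi, Finset.prod_mul_distrib]
  rw [h1]
  split_ifs with h
  · subst h
    have : ∀ i, (1 + (if x i then (-1 : ℝ) else 1) * (if x i then (-1 : ℝ) else 1)) = 2 := by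
      intro i; split_ifs <;> norm_num
    rw [Finset.prod_congr rfl fun i _ => this i]; simp
  · obtain ⟨i, hi⟩ := Function.ne_iff.mp h
    refine Finset.prod_eq_zero (Finset.mem_univ i) ?_
    revert hi
    cases x i <;> cases y i <;> simp

lemma inversion {n : ℕ} (g : (Fin n → Bool) → ℝ) (x : Fin n → Bool) :
    g x = ∑ S, fcoef n g S * chi S x := by
  have : ∀ S, fcoef n g S * chi S x = hcExp n (fun y => g y * (chi S y * chi S x)) := by
    intro S
    rw [fcoef, mul_comm, ← E_mul]
    congr 1; ext y; ring
  simp only [this]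
  rw [← E_sum]
  simp only [← Finset.mul_sum, chi_sum]
  simp [hcExp]

lemma plancherel {n : ℕ} (g h : (Fin n → Bool) → ℝ) :
    hcExp n (fun x => g x * h x) = ∑ S, fcoef n g S * fcoef n h S := by
  have : ∀ x, g x * h x = ∑ S, fcoef n h S * (g x * chi S x) := by
    intro x
    rw [inversion h x, Finset.mul_sum]
    refine Finset.sum_congr rfl fun S _ => ?_
    ring
  simp only [this]
  rw [E_sum]
  refine Finset.sum_congr rfl fun S _ => ?_
  rw [E_mul, mul_comm]; rfl

lemma parseval {n : ℕ} (g : (Fin n → Bool) → ℝ) :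
    hcExp n (fun x => g x ^ 2) = ∑ S, fcoef n g S ^ 2 := by
  simp only [sq, plancherel]

lemma chi_insert {n : ℕ} {V : Finset (Fin n)} {i : Fin n} (h : i ∉ V) (x : Fin n → Bool) :
    chi (insert i V) x = chi {i} x * chi V x := by
  simp [chi, Finset.prod_insert h]

lemma bonami {n : ℕ} (V : Finset (Fin n)) : ∀ a : Finset (Fin n) → ℝ,
    hcExp n (fun x => (∑ S ∈ V.powerset, a S * chi S x) ^ 4)
      ≤ (∑ S ∈ V.powerset, 3 ^ S.card * a S ^ 2) ^ 2 := by
  induction V using Finset.induction_on with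
  | empty => intro a; simp [chi, E_const]; apply le_of_eq; ring
  | insert i V hi ih =>
    intro a
    set Q : (Fin n → Bool) → ℝ := fun x => ∑ S ∈ V.powerset, a S * chi S x with hQ
    set R : (Fin n → Bool) → ℝ := fun x => ∑ S ∈ V.powerset, a (insert i S) * chi S x with hR
    have hiS : ∀ S ∈ V.powerset, i ∉ S := fun S hS hh => hi (Finset.mem_powerset.mp hS hh)
    have hP : ∀ x, (∑ S ∈ (insert i V).powerset, a S * chi S x) = Q x + chi {i} x * R x := by
      intro x
      rw [Finset.sum_powerset_insert hi, hQ, hR]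
      simp only [Finset.mul_sum]
      congr 1
      refine Finset.sum_congr rfl fun S hS => ?_
      rw [chi_insert (hiS S hS)]; ring
    have hq : (∑ S ∈ (insert i V).powerset, (3:ℝ) ^ S.card * a S ^ 2) =
        (∑ S ∈ V.powerset, (3:ℝ) ^ S.card * a S ^ 2) +
        3 * (∑ S ∈ V.powerset, (3:ℝ) ^ S.card * a (insert i S) ^ 2) := by
      rw [Finset.sum_powerset_insert hi, Finset.mul_sum]
      congr 1
      refine Finset.sum_congr rfl fun S hS => ?_
      rw [Finset.card_insert_of_notMem (hiS S hS)]; ring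
    have h1 := ih a
    have h2 := ih (fun S => a (insert i S))
    rw [hq]
    set q := ∑ S ∈ V.powerset, (3:ℝ) ^ S.card * a S ^ 2
    set r := ∑ S ∈ V.powerset, (3:ℝ) ^ S.card * a (insert i S) ^ 2
    have hq0 : 0 ≤ q := Finset.sum_nonneg fun S _ => by positivity
    have hr0 : 0 ≤ r := Finset.sum_nonneg fun S _ => by positivity
    change hcExp n (fun x => Q x ^ 4) ≤ q ^ 2 at h1
    change hcExp n (fun x => R x ^ 4) ≤ r ^ 2 at h2
    have hQf : ∀ x, Q (hcFlip x i) = Q x := fun x => by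
      simp only [hQ]
      exact Finset.sum_congr rfl fun S hS => by rw [chi_flip, if_neg (hiS S hS)]
    have hRf : ∀ x, R (hcFlip x i) = R x := fun x => by
      simp only [hR]
      exact Finset.sum_congr rfl fun S hS => by rw [chi_flip, if_neg (hiS S hS)]
    have hexp : ∀ x, (Q x + chi {i} x * R x) ^ 4 = (Q x ^ 4 + 6 * (Q x ^ 2 * R x ^ 2) + R x ^ 4)
        + chi {i} x * (4 * (Q x ^ 3 * R x + Q x * R x ^ 3)) := by
      intro x
      have hc := chi_sq {i} x
      have hc2 : chi {i} x ^ 2 = 1 := by rw [sq]; exact hc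
      have hc3 : chi {i} x ^ 3 = chi {i} x := by rw [pow_succ, hc2, one_mul]
      have hc4 : chi {i} x ^ 4 = 1 := by rw [pow_succ, hc3, hc]
      ring_nf
      rw [hc2, hc3, hc4]; ring
    simp only [hP, hexp]
    rw [E_add, E_odd i (fun x => chi {i} x * (4 * (Q x ^ 3 * R x + Q x * R x ^ 3)))
      (by intro x; rw [hQf, hRf, chi_flip]; simp), E_add, E_add, E_mul]
    have hcs := E_cs (fun x => Q x ^ 2) (fun x => R x ^ 2)
    simp only [← pow_mul] at hcs
    norm_num at hcs
    have hm0 : 0 ≤ hcExp n (fun x => Q x ^ 2 * R x ^ 2) := E_nonneg fun x => by positivity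
    have hR0 : 0 ≤ hcExp n (fun x => R x ^ 4) := E_nonneg fun x => by positivity
    have hm : hcExp n (fun x => Q x ^ 2 * R x ^ 2) ≤ q * r := by
      refine abs_le_of_sq_le_sq' ?_ (by positivity) |>.2
      calc _ ≤ _ := hcs
        _ ≤ q ^ 2 * r ^ 2 := mul_le_mul h1 h2 hR0 (by positivity)
        _ = _ := by ring
    nlinarith

lemma hyper {n : ℕ} (g : (Fin n → Bool) → ℝ) :
    ∑ S, (1/3 : ℝ) ^ S.card * fcoef n g S ^ 2 ≤
      hcExp n (fun x => |g x|) * √(hcExp n (fun x => g x ^ 2)) := by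
  set A := ∑ S, (1/3 : ℝ) ^ S.card * fcoef n g S ^ 2 with hA
  have hA0 : 0 ≤ A := Finset.sum_nonneg fun S _ => by positivity
  set v : (Fin n → Bool) → ℝ := fun x => ∑ S, ((1/3 : ℝ) ^ S.card * fcoef n g S) * chi S x with hv
  have h1 : hcExp n (fun x => g x * v x) = A := by
    simp only [hv, Finset.mul_sum]
    rw [E_sum]
    refine Finset.sum_congr rfl fun S _ => ?_
    rw [sq, ← mul_assoc]
    conv_rhs => rw [fcoef, ← fcoef, fcoef, ← E_mul]
    congr 1; ext x; rw [fcoef]; ring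
  have h2 : hcExp n (fun x => v x ^ 4) ≤ A ^ 2 := by
    have := bonami (Finset.univ : Finset (Fin n)) (fun S => (1/3 : ℝ) ^ S.card * fcoef n g S)
    rw [Finset.powerset_univ] at this
    refine this.trans (le_of_eq ?_)
    congr 1
    refine Finset.sum_congr rfl fun S _ => ?_
    rw [mul_pow, ← mul_assoc, sq ((1/3:ℝ)^S.card), ← mul_assoc, ← mul_pow]
    norm_num
  set a := hcExp n (fun x => |g x|)
  set b := hcExp n (fun x => g x ^ 2)
  have ha0 : 0 ≤ a := E_nonneg fun x => abs_nonneg _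
  have hb0 : 0 ≤ b := E_nonneg fun x => sq_nonneg _
  -- first Cauchy
  have h3 : A ^ 2 ≤ a * hcExp n (fun x => |g x| * v x ^ 2) := by
    have h := E_cs (fun x => √|g x|) (fun x => √|g x| * |v x|)
    have e1 : ∀ x, √|g x| * (√|g x| * |v x|) = |g x * v x| := fun x => by
      rw [← mul_assoc, Real.mul_self_sqrt (abs_nonneg _), abs_mul]
    have e2 : ∀ x, √|g x| ^ 2 = |g x| := fun x => Real.sq_sqrt (abs_nonneg _)
    have e3 : ∀ x, (√|g x| * |v x|) ^ 2 = |g x| * v x ^ 2 := fun x => by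
      rw [mul_pow, Real.sq_sqrt (abs_nonneg _), sq_abs]
    simp only [e1, e2, e3] at h
    refine le_trans ?_ h
    have := E_abs (fun x => g x * v x)
    rw [h1, abs_of_nonneg hA0] at this
    exact pow_le_pow_left₀ hA0 this 2
  have h4 : (hcExp n (fun x => |g x| * v x ^ 2)) ^ 2 ≤ b * A ^ 2 := by
    have h := E_cs (fun x => |g x|) (fun x => v x ^ 2)
    simp only [sq_abs, ← pow_mul] at h
    norm_num at h
    exact h.trans (mul_le_mul_of_nonneg_left h2 hb0)
  rcases hA0.eq_or_lt with h0 | hpos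
  · rw [← h0]; positivity
  have h5 : hcExp n (fun x => |g x| * v x ^ 2) ≤ √b * A := by
    refine abs_le_of_sq_le_sq' ?_ (by positivity) |>.2
    rw [mul_pow, Real.sq_sqrt hb0]; exact h4
  have h6 : A * A ≤ (a * √b) * A := by
    calc A * A = A ^ 2 := (sq A).symm
      _ ≤ _ := h3
      _ ≤ a * (√b * A) := mul_le_mul_of_nonneg_left h5 ha0
      _ = _ := by ring
  exact le_of_mul_le_mul_right h6 hpos

lemma chi_single {n : ℕ} (i : Fin n) (x : Fin n → Bool) :
    chi {i} x = if x i then (-1 : ℝ) else 1 := by simp [chi]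

lemma chi_single_pw {n : ℕ} {J : Finset (Fin n)} {i : Fin n} (hi : i ∈ J) (x y : Fin n → Bool) :
    chi {i} (J.piecewise y x) = chi {i} y := by
  simp only [chi_single, Finset.piecewise_eq_of_mem _ _ _ hi]

lemma pw_flip_left {n : ℕ} {J : Finset (Fin n)} {i : Fin n} (hi : i ∈ J) (x y : Fin n → Bool) :
    J.piecewise (hcFlip y i) x = hcFlip (J.piecewise y x) i := by
  ext k
  by_cases hk : k = i
  · subst hk; simp [hcFlip, hi]
  · by_cases hJ : k ∈ J <;> simp [hcFlip, hk, hJ]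

lemma pw_flip_right {n : ℕ} {J : Finset (Fin n)} {i : Fin n} (hi : i ∈ J) (x y : Fin n → Bool) :
    J.piecewise y (hcFlip x i) = J.piecewise y x := by
  ext k
  by_cases hk : k = i
  · subst hk; simp [hi]
  · by_cases hJ : k ∈ J <;> simp [hcFlip, hk, hJ]

lemma E_swap {n : ℕ} (J : Finset (Fin n)) (H : (Fin n → Bool) → (Fin n → Bool) → ℝ) :
    hcExp n (fun x => hcExp n (fun y => H x (J.piecewise y x))) =
    hcExp n (fun x => hcExp n (fun y => H (J.piecewise y x) x)) := by
  unfold hcExp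
  rw [← Finset.sum_div, ← Finset.sum_div]
  congr 2
  have hinv : Function.Involutive (fun p : (Fin n → Bool) × (Fin n → Bool) =>
      (J.piecewise p.2 p.1, J.piecewise p.1 p.2)) := by
    rintro ⟨x, y⟩
    ext k <;> by_cases hk : k ∈ J <;> simp [hk]
  have h := Equiv.sum_comp hinv.toPerm (fun p => H (J.piecewise p.2 p.1) p.1)
  rw [← Fintype.sum_prod_type' (fun x y => H x (J.piecewise y x)),
    ← Fintype.sum_prod_type' (fun x y => H (J.piecewise y x) x), ← h]
  refine Finset.sum_congr rfl ?_
  rintro ⟨x, y⟩ _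
  have : J.piecewise (J.piecewise x y) (J.piecewise y x) = x := by
    ext k; by_cases hk : k ∈ J <;> simp [hk]
  simp [Function.Involutive.toPerm, this]

/-- The averaged first-order coefficient. -/
def gJ {n : ℕ} (J : Finset (Fin n)) (i : Fin n) (F : (Fin n → Bool) → ℝ) (x : Fin n → Bool) : ℝ :=
  hcExp n (fun y => F (J.piecewise y x) * chi {i} y)

lemma gJ_flip {n : ℕ} {J : Finset (Fin n)} {i : Fin n} (hi : i ∈ J) (F : (Fin n → Bool) → ℝ)
    (x : Fin n → Bool) : gJ J i F (hcFlip x i) = gJ J i F x := by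
  simp only [gJ, pw_flip_right hi]

lemma gJ_bessel {n : ℕ} (J : Finset (Fin n)) (F : (Fin n → Bool) → ℝ) (hF : ∀ x, F x ^ 2 ≤ 1)
    (x : Fin n → Bool) : ∑ i ∈ J, gJ J i F x ^ 2 ≤ 1 := by
  set G : (Fin n → Bool) → ℝ := fun y => F (J.piecewise y x)
  have h1 : hcExp n (fun y => G y ^ 2) ≤ 1 := by
    rw [← E_const (n := n) 1]; exact E_mono fun y => hF _
  rw [parseval] at h1
  refine le_trans ?_ h1
  have : ∑ i ∈ J, gJ J i F x ^ 2 = ∑ S ∈ J.image (fun i => ({i} : Finset (Fin n))), fcoef n G S ^ 2 := by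
    rw [Finset.sum_image (by intro a _ b _ h; simpa using h)]
    rfl
  rw [this]
  exact Finset.sum_le_sum_of_subset_of_nonneg (Finset.subset_univ _) fun _ _ _ => sq_nonneg _

lemma avg_chi {n : ℕ} {J : Finset (Fin n)} {i : Fin n} (hi : i ∈ J) (T : Finset (Fin n))
    (x : Fin n → Bool) :
    hcExp n (fun y => chi T (J.piecewise y x) * chi {i} (J.piecewise y x)) =
      if T ∩ J = {i} then chi T x * chi {i} x else 0 := by
  split_ifs with h
  · have hiT : i ∈ T := by
      have : i ∈ T ∩ J := by rw [h]; simp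
      exact (Finset.mem_inter.mp this).1
    have hd : ∀ z, chi T z * chi {i} z = chi (T.erase i) z := by
      intro z
      rw [← Finset.insert_erase hiT, chi_insert (Finset.notMem_erase i T)]
      rw [Finset.erase_insert (Finset.notMem_erase i T)]
      rw [mul_comm, ← mul_assoc, chi_sq, one_mul]
    simp only [hd]
    have : ∀ y, chi (T.erase i) (J.piecewise y x) = chi (T.erase i) x := by
      intro y
      unfold chi
      refine Finset.prod_congr rfl fun k hk => ?_
      have hkJ : k ∉ J := by
        intro hkJ
        have : k ∈ T ∩ J := Finset.mem_inter.mpr ⟨Finset.mem_of_mem_erase hk, hkJ⟩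
        rw [h] at this
        exact Finset.ne_of_mem_erase hk (Finset.mem_singleton.mp this)
      rw [Finset.piecewise_eq_of_notMem _ _ _ hkJ]
    simp only [this, E_const]
  · have : ∃ k ∈ J, ¬ (k ∈ T ↔ k = i) := by
      by_contra hcon
      push Not at hcon
      apply h
      ext k
      simp only [Finset.mem_inter, Finset.mem_singleton]
      constructor
      · rintro ⟨a, b⟩; exact (hcon k b).mp a
      · rintro rfl; exact ⟨(hcon k hi).mpr rfl, hi⟩
    obtain ⟨k, hkJ, hk⟩ := this
    refine E_odd k _ fun y => ?_
    rw [pw_flip_left hkJ, chi_flip, chi_flip]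
    by_cases h1 : k ∈ T <;> by_cases h2 : k = i <;> simp_all

lemma gJ_fcoef {n : ℕ} {J : Finset (Fin n)} {i : Fin n} (hi : i ∈ J) (F : (Fin n → Bool) → ℝ)
    (T : Finset (Fin n)) :
    fcoef n (fun x => chi {i} x * gJ J i F x) T = if T ∩ J = {i} then fcoef n F T else 0 := by
  have h1 : fcoef n (fun x => chi {i} x * gJ J i F x) T =
      hcExp n (fun x => hcExp n (fun y => (chi T x * chi {i} x) *
        (F (J.piecewise y x) * chi {i} (J.piecewise y x)))) := by
    unfold fcoef
    congr 1; ext x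
    rw [E_mul]
    simp only [gJ, chi_single_pw hi]
    ring
  rw [h1, E_swap J (fun a b => (chi T a * chi {i} a) * (F b * chi {i} b))]
  have h2 : ∀ x, hcExp n (fun y => (chi T (J.piecewise y x) * chi {i} (J.piecewise y x)) *
      (F x * chi {i} x)) = if T ∩ J = {i} then F x * chi T x else 0 := by
    intro x
    have := avg_chi hi T x
    simp only [mul_comm _ (F x * chi {i} x)]
    rw [E_mul, this]
    split_ifs
    · have := chi_sq {i} x
      linear_combination (F x * chi T x) * this
    · simp
  simp only [h2]
  split_ifs
  · rfl
  · exact E_const 0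

lemma gJ_abs {n : ℕ} {J : Finset (Fin n)} {i : Fin n} (hi : i ∈ J) (f : (Fin n → Bool) → Bool) :
    hcExp n (fun x => |gJ J i (toReal f) x|) ≤ influence n f i := by
  set h : (Fin n → Bool) → ℝ := fun x => if f (hcFlip x i) = f x then 0 else 1 with hh
  have h1 : ∀ x, |gJ J i (toReal f) x| ≤ hcExp n (fun y => h (J.piecewise y x)) := by
    intro x
    have e : gJ J i (toReal f) x = hcExp n (fun y => (1/2 : ℝ) * ((toReal f (J.piecewise y x) -
        toReal f (hcFlip (J.piecewise y x) i)) * chi {i} y)) := by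
      rw [E_mul]
      simp only [sub_mul]
      rw [E_sub]
      have := E_flip i (fun y => toReal f (hcFlip (J.piecewise y x) i) * chi {i} y)
      simp only [pw_flip_left hi, hcFlip_flip, chi_flip, Finset.mem_singleton, if_true] at this
      rw [← this]
      have h2 := E_mul (-1) (fun y => toReal f (J.piecewise y x) * chi {i} y)
      have h3 : (fun y => toReal f (J.piecewise y x) * -chi {i} y) =
        (fun y => -1 * (toReal f (J.piecewise y x) * chi {i} y)) := by ext; ring
      rw [h3, h2, gJ]; ring
    rw [e]
    refine (E_abs _).trans (E_mono fun y => ?_)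
    rw [abs_mul, abs_mul, chi_abs]
    simp only [hh, toReal]
    cases f (J.piecewise y x) <;> cases f (hcFlip (J.piecewise y x) i) <;> norm_num
  refine (E_mono h1).trans (le_of_eq ?_)
  rw [E_swap J (fun _ b => h b)]
  simp only [E_const]
  rfl

/-- Colour class of `i`. -/
def cls {n m : ℕ} (φ : Fin n → Fin m) (i : Fin n) : Finset (Fin n) :=
  Finset.univ.filter (fun k => φ k = φ i)

lemma mem_cls {n m : ℕ} (φ : Fin n → Fin m) (i : Fin n) : i ∈ cls φ i := by simp [cls]

lemma toReal_sq_le {n : ℕ} (f : (Fin n → Bool) → Bool) (x : Fin n → Bool) : toReal f x ^ 2 ≤ 1 := by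
  unfold toReal; split_ifs <;> norm_num

lemma cls_bessel {n m : ℕ} (φ : Fin n → Fin m) (F : (Fin n → Bool) → ℝ) (hF : ∀ x, F x ^ 2 ≤ 1)
    (x : Fin n → Bool) : ∑ i, gJ (cls φ i) i F x ^ 2 ≤ m := by
  have h : ∑ i, gJ (cls φ i) i F x ^ 2 = ∑ j : Fin m, ∑ i with φ i = j, gJ (cls φ i) i F x ^ 2 :=
    (Finset.sum_fiberwise _ _ _).symm
  rw [h]
  calc _ ≤ ∑ j : Fin m, (1:ℝ) := by
        refine Finset.sum_le_sum fun j _ => ?_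
        refine le_trans (le_of_eq ?_) (gJ_bessel (Finset.univ.filter (fun k => φ k = j)) F hF x)
        refine Finset.sum_congr rfl fun i hi => ?_
        have : cls φ i = Finset.univ.filter (fun k => φ k = j) := by
          rw [cls, (Finset.mem_filter.mp hi).2]
        rw [this]
    _ = m := by simp

lemma hyp_phi {n m : ℕ} (φ : Fin n → Fin m) (f : (Fin n → Bool) → Bool) :
    ∑ i, ∑ T, (if T ∩ cls φ i = {i} then (1/3 : ℝ) ^ T.card * fcoef n (toReal f) T ^ 2 else 0)
      ≤ √m * √(∑ i, influence n f i ^ 2) := by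
  set F := toReal f
  set b : Fin n → ℝ := fun i => hcExp n (fun x => gJ (cls φ i) i F x ^ 2) with hb
  have hb0 : ∀ i, 0 ≤ b i := fun i => E_nonneg fun x => sq_nonneg _
  have h1 : ∀ i, ∑ T, (if T ∩ cls φ i = {i} then (1/3 : ℝ) ^ T.card * fcoef n F T ^ 2 else 0)
      ≤ influence n f i * √(b i) := by
    intro i
    have h := hyper (fun x => chi {i} x * gJ (cls φ i) i F x)
    simp only [gJ_fcoef (mem_cls φ i), abs_mul, chi_abs, one_mul, mul_pow, sq (chi _ _), chi_sq] at h
    refine le_trans (le_of_eq ?_) (h.trans ?_)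
    · refine Finset.sum_congr rfl fun T _ => ?_
      split_ifs <;> simp
    · exact mul_le_mul_of_nonneg_right (gJ_abs (mem_cls φ i) f) (Real.sqrt_nonneg _)
  refine (Finset.sum_le_sum fun i _ => h1 i).trans ?_
  refine (Real.sum_mul_le_sqrt_mul_sqrt _ _ _).trans ?_
  rw [mul_comm]
  refine mul_le_mul_of_nonneg_right (Real.sqrt_le_sqrt ?_) (Real.sqrt_nonneg _)
  calc ∑ i, √(b i) ^ 2 = ∑ i, b i := Finset.sum_congr rfl fun i _ => Real.sq_sqrt (hb0 i)
    _ = hcExp n (fun x => ∑ i, gJ (cls φ i) i F x ^ 2) := (E_sum _ _).symm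
    _ ≤ hcExp n (fun _ => (m:ℝ)) := E_mono fun x => cls_bessel φ F (toReal_sq_le f) x
    _ = m := E_const _

lemma tal_phi {n m : ℕ} (φ : Fin n → Fin m) (f : (Fin n → Bool) → Bool)
    (col : (Fin n → Bool) → Fin n → Bool) (hcol : colSymm col) :
    ∑ i, ∑ T, (if T ∩ cls φ i = {i} then fcoef n (toReal f) T ^ 2 else 0)
      ≤ √m * talagrandCol f col := by
  set F := toReal f with hF
  set g : Fin n → (Fin n → Bool) → ℝ := fun i => gJ (cls φ i) i F with hg
  set ur : Fin n → (Fin n → Bool) → ℝ := fun i x =>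
    if f x = true ∧ f (hcFlip x i) ≠ f x ∧ col x i = true then chi {i} x else 0 with hur
  set ub : Fin n → (Fin n → Bool) → ℝ := fun i x =>
    if f x = false ∧ f (hcFlip x i) ≠ f x ∧ col x i = false then - chi {i} x else 0 with hub
  have h1 : ∀ i, ∑ T, (if T ∩ cls φ i = {i} then fcoef n F T ^ 2 else 0) =
      hcExp n (fun x => ur i x * g i x + ub i x * g i x) := by
    intro i
    have e1 : ∑ T, (if T ∩ cls φ i = {i} then fcoef n F T ^ 2 else 0) =
        hcExp n (fun x => (chi {i} x * g i x) * F x) := by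
      rw [plancherel]
      simp only [hg, gJ_fcoef (mem_cls φ i)]
      refine Finset.sum_congr rfl fun T _ => ?_
      split_ifs <;> ring
    rw [e1]
    have key : hcExp n (fun x => ((chi {i} x * g i x) * F x - (ur i x * g i x + ub i x * g i x))) = 0 := by
      refine E_odd i _ fun x => ?_
      have hgf : g i (hcFlip x i) = g i x := gJ_flip (mem_cls φ i) F x
      rw [hgf]
      have : chi {i} (hcFlip x i) * F (hcFlip x i) - (ur i (hcFlip x i) + ub i (hcFlip x i)) =
          - (chi {i} x * F x - (ur i x + ub i x)) := by
        simp only [hur, hub, hF, toReal, hcFlip_flip, hcol x i, chi_flip, Finset.mem_singleton, if_true]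
        cases f x <;> cases f (hcFlip x i) <;> cases col x i <;> simp
      linear_combination (g i x) * this
    rw [E_sub] at key
    linarith
  simp only [h1]
  rw [← E_sum]
  have hcs : ∀ (u : Fin n → (Fin n → Bool) → ℝ) (s : ℕ) (x), ∑ i, u i x ^ 2 = s →
      ∑ i, u i x * g i x ≤ √m * √s := by
    intro u s x hu
    refine (Real.sum_mul_le_sqrt_mul_sqrt _ _ _).trans ?_
    rw [hu, mul_comm]
    exact mul_le_mul_of_nonneg_right (Real.sqrt_le_sqrt (cls_bessel φ F (toReal_sq_le f) x))
      (Real.sqrt_nonneg _)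
  have hr : ∀ x, ∑ i, ur i x ^ 2 = (sRed f col x : ℕ) := by
    intro x
    simp only [hur, sRed]
    cases hfx : f x <;> simp [ite_pow, sq, chi_sq]
  have hbl : ∀ x, ∑ i, ub i x ^ 2 = (sBlue f col x : ℕ) := by
    intro x
    simp only [hub, sBlue]
    cases hfx : f x <;> simp [ite_pow, sq, chi_sq]
  calc _ ≤ hcExp n (fun x => √m * √(sRed f col x) + √m * √(sBlue f col x)) := by
        refine E_mono fun x => ?_
        rw [Finset.sum_add_distrib]
        exact add_le_add (hcs ur _ x (hr x)) (hcs ub _ x (hbl x))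
    _ = _ := by rw [E_add, E_mul, E_mul, talagrandCol]; ring

lemma inter_cls_iff {n m : ℕ} (φ : Fin n → Fin m) (i : Fin n) (T : Finset (Fin n)) :
    T ∩ cls φ i = {i} ↔ i ∈ T ∧ ∀ k ∈ T, k ≠ i → φ k ≠ φ i := by
  constructor
  · intro h
    have hi : i ∈ T ∩ cls φ i := by rw [h]; simp
    refine ⟨(Finset.mem_inter.mp hi).1, fun k hk hki he => hki ?_⟩
    have : k ∈ T ∩ cls φ i := by simp [cls, hk, he]
    rw [h] at this
    simpa using this
  · rintro ⟨h1, h2⟩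
    ext k
    simp only [cls, Finset.mem_inter, Finset.mem_filter, Finset.mem_univ, true_and,
      Finset.mem_singleton]
    constructor
    · rintro ⟨a, b⟩
      by_contra hk
      exact h2 k a hk b
    · rintro rfl; exact ⟨h1, rfl⟩

lemma count_fix {n m : ℕ} (T : Finset (Fin n)) (i : Fin n) (hi : i ∈ T) (j : Fin m) (hm : 1 ≤ m) :
    (((Finset.univ.filter (fun φ : Fin n → Fin m => φ i = j ∧ ∀ k ∈ T, k ≠ i → φ k ≠ j)).card : ℕ) : ℝ)
      = (m:ℝ) ^ n * ((1 / m) * (1 - 1 / m) ^ (T.card - 1)) := by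
  have hm0 : (m:ℝ) ≠ 0 := by positivity
  have e : (Finset.univ.filter (fun φ : Fin n → Fin m => φ i = j ∧ ∀ k ∈ T, k ≠ i → φ k ≠ j)) =
      Fintype.piFinset (fun k => if k = i then {j} else if k ∈ T then {j}ᶜ else Finset.univ) := by
    ext φ
    simp only [Finset.mem_filter, Finset.mem_univ, true_and, Fintype.mem_piFinset]
    constructor
    · rintro ⟨h1, h2⟩ k
      split_ifs with h3 h4
      · subst h3; simp [h1]
      · simpa using h2 k h4 h3
      · simp
    · intro h
      refine ⟨by simpa using h i, fun k hk hki => ?_⟩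
      have := h k
      rw [if_neg hki, if_pos hk] at this
      simpa using this
  rw [e, Fintype.card_piFinset]
  push_cast
  have e2 : ∀ k, (((if k = i then ({j} : Finset (Fin m)) else if k ∈ T then {j}ᶜ else Finset.univ).card : ℕ) : ℝ)
      = m * ((if k = i then (1 / (m:ℝ)) else 1) * (if k ∈ T.erase i then (1 - 1 / (m:ℝ)) else 1)) := by
    intro k
    by_cases h1 : k = i
    · simp [h1, hm0]
    · by_cases h2 : k ∈ T
      · simp [h1, h2, Finset.card_compl, Nat.cast_sub hm]; field_simp
      · simp [h1, h2]
  rw [Finset.prod_congr rfl fun k _ => e2 k, Finset.prod_mul_distrib, Finset.prod_mul_distrib]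
  congr 1
  · simp
  · congr 1
    · simp
    · rw [Finset.prod_ite_mem, Finset.univ_inter, Finset.prod_const, Finset.card_erase_of_mem hi]

lemma count_good {n m : ℕ} (T : Finset (Fin n)) (i : Fin n) (hi : i ∈ T) (hm : 1 ≤ m) :
    ∑ φ : Fin n → Fin m, (if T ∩ cls φ i = {i} then (1:ℝ) else 0)
      = (m:ℝ) ^ n * (1 - 1 / m) ^ (T.card - 1) := by
  have hm0 : (m:ℝ) ≠ 0 := by positivity
  have e : ∀ φ : Fin n → Fin m, (if T ∩ cls φ i = {i} then (1:ℝ) else 0) =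
      ∑ j : Fin m, (if φ i = j ∧ ∀ k ∈ T, k ≠ i → φ k ≠ j then (1:ℝ) else 0) := by
    intro φ
    rw [Finset.sum_eq_single (φ i)]
    · simp only [inter_cls_iff, hi, true_and]
    · intro b _ hb
      rw [if_neg]
      rintro ⟨h, _⟩; exact hb h.symm
    · simp
  simp only [e]
  rw [Finset.sum_comm]
  simp only [Finset.sum_boole, count_fix T i hi _ hm]
  simp
  field_simp

lemma average {n m : ℕ} (hm : 1 ≤ m) (w : Finset (Fin n) → ℝ) (C : ℝ)
    (h : ∀ φ : Fin n → Fin m, ∑ i, ∑ T, (if T ∩ cls φ i = {i} then w T else 0) ≤ C) :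
    ∑ T : Finset (Fin n), w T * (T.card * (1 - 1 / (m:ℝ)) ^ (T.card - 1)) ≤ C := by
  have hm0 : (0:ℝ) < m := by positivity
  have h1 : ∑ φ : Fin n → Fin m, ∑ i, ∑ T, (if T ∩ cls φ i = {i} then w T else 0) ≤ (m:ℝ) ^ n * C := by
    refine (Finset.sum_le_sum fun φ _ => h φ).trans (le_of_eq ?_)
    simp
  have h2 : ∑ φ : Fin n → Fin m, ∑ i, ∑ T, (if T ∩ cls φ i = {i} then w T else 0) =
      (m:ℝ) ^ n * ∑ T : Finset (Fin n), w T * (T.card * (1 - 1 / (m:ℝ)) ^ (T.card - 1)) := by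
    rw [Finset.sum_comm]
    simp only [Finset.sum_comm (s := (Finset.univ : Finset (Fin n → Fin m)))]
    rw [Finset.sum_comm, Finset.mul_sum]
    refine Finset.sum_congr rfl fun T _ => ?_
    have : ∀ i, ∑ φ : Fin n → Fin m, (if T ∩ cls φ i = {i} then w T else 0) =
        if i ∈ T then w T * ((m:ℝ) ^ n * (1 - 1 / m) ^ (T.card - 1)) else 0 := by
      intro i
      split_ifs with hi
      · rw [← count_good T i hi hm, Finset.mul_sum]
        exact Finset.sum_congr rfl fun φ _ => by split_ifs <;> simp
      · refine Finset.sum_eq_zero fun φ _ => if_neg ?_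
        rw [inter_cls_iff]; tauto
    simp only [this]
    rw [Finset.sum_ite_mem, Finset.univ_inter, Finset.sum_const, nsmul_eq_mul]
    ring
  rw [h2] at h1
  exact le_of_mul_le_mul_left h1 (by positivity)

/-- Low-level weight. -/
def wLow (n : ℕ) (g : (Fin n → Bool) → ℝ) (d : ℕ) : ℝ :=
  ∑ S ∈ Finset.univ.filter (fun S : Finset (Fin n) => 1 ≤ S.card ∧ S.card < d), (fcoef n g S) ^ 2

lemma wLow_inf {n : ℕ} (f : (Fin n → Bool) → Bool) (d : ℕ) :
    wLow n (toReal f) d ≤ 6 ^ d * √(∑ i, influence n f i ^ 2) := by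
  have h := average (m := 2) (by norm_num) _ _ (fun φ => hyp_phi φ f)
  set s := √(∑ i, influence n f i ^ 2)
  have hs : 0 ≤ s := Real.sqrt_nonneg _
  have h2 : (2 * (1/6:ℝ) ^ d) * wLow n (toReal f) d ≤ √(2:ℕ) * s := by
    refine le_trans ?_ h
    rw [wLow, Finset.mul_sum]
    refine le_trans (Finset.sum_le_sum (g := fun T => (1/3 : ℝ) ^ T.card * fcoef n (toReal f) T ^ 2 *
      (T.card * (1 - 1 / ((2:ℕ):ℝ)) ^ (T.card - 1))) fun T hT => ?_)
      (Finset.sum_le_sum_of_subset_of_nonneg (Finset.filter_subset _ _) fun T _ _ => ?_)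
    · obtain ⟨h1, h3⟩ := (Finset.mem_filter.mp hT).2
      have e1 : (1:ℝ) ≤ T.card := by exact_mod_cast h1
      have e2 : (1/6:ℝ) ^ d ≤ (1/6:ℝ) ^ T.card := pow_le_pow_of_le_one (by norm_num) (by norm_num) h3.le
      obtain ⟨t, ht⟩ : ∃ t, T.card = t + 1 := ⟨T.card - 1, by omega⟩
      have e3 : 2 * (1/6:ℝ) ^ T.card = (1/3 : ℝ) ^ T.card * (1/2) ^ (T.card - 1) := by
        rw [ht, Nat.add_sub_cancel, show (1/6:ℝ) = (1/3) * (1/2) by norm_num, mul_pow, pow_succ (1/2:ℝ)]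
        ring
      have e4 : (1 - 1 / ((2:ℕ):ℝ)) = 1/2 := by norm_num
      rw [e4]
      have e5 : 0 ≤ fcoef n (toReal f) T ^ 2 := sq_nonneg _
      calc 2 * (1/6:ℝ) ^ d * fcoef n (toReal f) T ^ 2 ≤ (2 * (1/6:ℝ) ^ T.card) * fcoef n (toReal f) T ^ 2 := by
            gcongr
        _ = ((1/3 : ℝ) ^ T.card * fcoef n (toReal f) T ^ 2 * (1/2) ^ (T.card - 1)) * 1 := by rw [e3]; ring
        _ ≤ ((1/3 : ℝ) ^ T.card * fcoef n (toReal f) T ^ 2 * (1/2) ^ (T.card - 1)) * T.card := by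
            gcongr
        _ = _ := by ring
    · have e4 : (1 - 1 / ((2:ℕ):ℝ)) = 1/2 := by norm_num
      rw [e4]; positivity
  have h3 : √((2:ℕ):ℝ) ≤ 2 := by
    rw [Real.sqrt_le_left (by norm_num)]; norm_num
  have h4 : (6:ℝ) ^ d * (1/6) ^ d = 1 := by rw [← mul_pow]; norm_num
  have h5 : (2 * (1/6:ℝ) ^ d) * wLow n (toReal f) d ≤ 2 * s :=
    h2.trans (mul_le_mul_of_nonneg_right h3 hs)
  have h6 : (1/6:ℝ) ^ d * wLow n (toReal f) d ≤ s := by linarith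
  calc wLow n (toReal f) d = (6:ℝ) ^ d * ((1/6) ^ d * wLow n (toReal f) d) := by
        rw [← mul_assoc, h4, one_mul]
    _ ≤ _ := mul_le_mul_of_nonneg_left h6 (by positivity)

lemma hcVar_le {n : ℕ} (f : (Fin n → Bool) → Bool) : hcVar n f ≤ 1 / 4 := by
  unfold hcVar; nlinarith [sq_nonneg (hcExp n (toReal f) - 1/2)]

lemma chi_empty {n : ℕ} (x : Fin n → Bool) : chi ∅ x = 1 := by simp [chi]

lemma wGe_one {n : ℕ} (f : (Fin n → Bool) → Bool) : wGe n (toReal f) 1 = hcVar n f := by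
  have h := parseval (toReal f)
  have e : ∀ x, toReal f x ^ 2 = toReal f x := fun x => by unfold toReal; split_ifs <;> norm_num
  simp only [e] at h
  rw [hcVar]
  have h2 : ∑ S, fcoef n (toReal f) S ^ 2 = fcoef n (toReal f) ∅ ^ 2 + wGe n (toReal f) 1 := by
    rw [wGe, ← Finset.add_sum_erase _ _ (Finset.mem_univ ∅)]
    congr 1
    refine Finset.sum_congr ?_ fun _ _ => rfl
    ext S; simp [Nat.one_le_iff_ne_zero]
  have h3 : fcoef n (toReal f) ∅ = hcExp n (toReal f) := by
    unfold fcoef; simp only [chi_empty, mul_one]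
  rw [h3] at h2
  have : hcExp n (fun x => toReal f x) = hcExp n (toReal f) := rfl
  linarith

lemma wLow_add {n : ℕ} (f : (Fin n → Bool) → Bool) (d : ℕ) (hd : 1 ≤ d) :
    wLow n (toReal f) d + wGe n (toReal f) d = hcVar n f := by
  rw [← wGe_one, wLow, wGe, wGe, ← Finset.sum_union]
  · refine Finset.sum_congr ?_ fun _ _ => rfl
    ext S; simp only [Finset.mem_union, Finset.mem_filter, Finset.mem_univ, true_and]; omega
  · rw [Finset.disjoint_left]
    intro S; simp only [Finset.mem_filter, Finset.mem_univ, true_and]; omega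

lemma wLow_var {n : ℕ} (f : (Fin n → Bool) → Bool) (d : ℕ) :
    wLow n (toReal f) d ≤ 3 ^ d * (2 * hcVar n f * √(hcVar n f)) := by
  set μ := hcExp n (toReal f) with hμ
  have h := hyper (fun x => toReal f x - μ)
  have hμ0 : 0 ≤ μ := E_nonneg fun x => by unfold toReal; split_ifs <;> norm_num
  have hμ1 : μ ≤ 1 := by
    rw [← E_const (n := n) 1]
    exact E_mono fun x => by unfold toReal; split_ifs <;> norm_num
  have e1 : hcExp n (fun x => |toReal f x - μ|) = 2 * hcVar n f := by
    have : ∀ x, |toReal f x - μ| = (1 - 2 * μ) * toReal f x + μ := by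
      intro x; unfold toReal
      split_ifs
      · rw [abs_of_nonneg (by linarith)]; ring
      · rw [abs_of_nonpos (by linarith)]; ring
    simp only [this]
    rw [E_add, E_const, E_mul, hcVar]
    change (1 - 2 * μ) * μ + μ = 2 * (μ - μ ^ 2)
    ring
  have e2 : hcExp n (fun x => (toReal f x - μ) ^ 2) = hcVar n f := by
    have : ∀ x, (toReal f x - μ) ^ 2 = (1 - 2 * μ) * toReal f x + μ ^ 2 := by
      intro x; unfold toReal
      split_ifs <;> ring
    simp only [this]
    rw [E_add, E_const, E_mul, hcVar]
    change (1 - 2 * μ) * μ + μ ^ 2 = (μ - μ ^ 2)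
    ring
  rw [e1, e2] at h
  have h2 : (1/3:ℝ) ^ d * wLow n (toReal f) d ≤ 2 * hcVar n f * √(hcVar n f) := by
    refine le_trans ?_ h
    rw [wLow, Finset.mul_sum]
    refine le_trans (Finset.sum_le_sum (g := fun T => (1/3 : ℝ) ^ T.card *
      fcoef n (fun x => toReal f x - μ) T ^ 2) fun T hT => ?_)
      (Finset.sum_le_sum_of_subset_of_nonneg (Finset.filter_subset _ _) fun T _ _ => by positivity)
    obtain ⟨h1, h3⟩ := (Finset.mem_filter.mp hT).2
    have e3 : fcoef n (fun x => toReal f x - μ) T = fcoef n (toReal f) T := by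
      unfold fcoef
      simp only [sub_mul]
      obtain ⟨i, hi⟩ := Finset.card_pos.mp h1
      rw [E_sub, E_odd i (fun x => μ * chi T x) (fun x => by rw [chi_flip, if_pos hi]; ring), sub_zero]
    rw [e3]
    have : (1/3:ℝ) ^ d ≤ (1/3:ℝ) ^ T.card := pow_le_pow_of_le_one (by norm_num) (by norm_num) h3.le
    gcongr
  have h4 : (3:ℝ) ^ d * (1/3) ^ d = 1 := by rw [← mul_pow]; norm_num
  calc wLow n (toReal f) d = (3:ℝ) ^ d * ((1/3) ^ d * wLow n (toReal f) d) := by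
        rw [← mul_assoc, h4, one_mul]
    _ ≤ _ := mul_le_mul_of_nonneg_left h2 (by positivity)

lemma tal_nonneg {n : ℕ} (f : (Fin n → Bool) → Bool) (col : (Fin n → Bool) → Fin n → Bool) :
    0 ≤ talagrandCol f col :=
  add_nonneg (E_nonneg fun _ => Real.sqrt_nonneg _) (E_nonneg fun _ => Real.sqrt_nonneg _)

lemma wApprox_tal {n : ℕ} (f : (Fin n → Bool) → Bool) (col : (Fin n → Bool) → Fin n → Bool)
    (hcol : colSymm col) (d : ℕ) (hd : 1 ≤ d) :
    √d * wApprox n (toReal f) d ≤ 4 * talagrandCol f col := by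
  have h := average (m := 4 * d) (by omega) _ _ (fun φ => tal_phi φ f col hcol)
  have hd0 : (0:ℝ) < d := by positivity
  have hd1 : (1:ℝ) ≤ d := by exact_mod_cast hd
  have e : ((4 * d : ℕ) : ℝ) = 4 * d := by push_cast; ring
  rw [e] at h
  have hb0 : (0:ℝ) ≤ 1 - 1 / (4 * d) := by
    rw [sub_nonneg, div_le_one (by positivity)]; linarith
  have h2 : (d / 2 : ℝ) * wApprox n (toReal f) d ≤ √(4 * d) * talagrandCol f col := by
    refine le_trans ?_ h
    rw [wApprox, Finset.mul_sum]
    refine le_trans (Finset.sum_le_sum (g := fun T => fcoef n (toReal f) T ^ 2 *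
      (T.card * (1 - 1 / (4 * d : ℝ)) ^ (T.card - 1))) fun T hT => ?_)
      (Finset.sum_le_sum_of_subset_of_nonneg (Finset.filter_subset _ _) fun T _ _ => by positivity)
    obtain ⟨h1, h3⟩ := (Finset.mem_filter.mp hT).2
    have e1 : (d:ℝ) ≤ T.card := by exact_mod_cast h1
    have e2 : (1 - 1 / (4 * d : ℝ)) ^ (2 * d) ≤ (1 - 1 / (4 * d : ℝ)) ^ (T.card - 1) :=
      pow_le_pow_of_le_one hb0 (by rw [sub_le_self_iff]; positivity) (by omega)
    have e3 : (1/2 : ℝ) ≤ (1 - 1 / (4 * d : ℝ)) ^ (2 * d) := by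
      have := one_add_mul_le_pow (a := -(1 / (4 * d : ℝ))) (by linarith) (2 * d)
      rw [← sub_eq_add_neg] at this
      refine le_trans (le_of_eq ?_) this
      push_cast; field_simp; ring
    rw [mul_comm]
    refine mul_le_mul_of_nonneg_left ?_ (sq_nonneg _)
    calc (d/2 : ℝ) = d * (1/2) := by ring
      _ ≤ _ := mul_le_mul e1 (e3.trans e2) (by norm_num) (by positivity)
  have h4 : √(4 * d : ℝ) = 2 * √d := by
    rw [Real.sqrt_mul (by norm_num), show (4:ℝ) = 2 ^ 2 by norm_num, Real.sqrt_sq (by norm_num)]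
  rw [h4] at h2
  have hs : 0 < √(d:ℝ) := Real.sqrt_pos.mpr hd0
  have hss : √(d:ℝ) * √d = d := Real.mul_self_sqrt hd0.le
  refine le_of_mul_le_mul_left ?_ hs
  calc √(d:ℝ) * (√d * wApprox n (toReal f) d) = 2 * (d / 2 * wApprox n (toReal f) d) := by
        rw [← mul_assoc, hss]; ring
    _ ≤ 2 * (2 * √d * talagrandCol f col) := by linarith
    _ = _ := by ring

lemma wGe_tal {n : ℕ} (f : (Fin n → Bool) → Bool) (col : (Fin n → Bool) → Fin n → Bool)
    (hcol : colSymm col) : ∀ (k d : ℕ), 1 ≤ d → n < d + k →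
    √d * wGe n (toReal f) d ≤ 16 * talagrandCol f col := by
  have ht := tal_nonneg f col
  intro k
  induction k with
  | zero =>
    intro d hd hn
    have : wGe n (toReal f) d = 0 := by
      rw [wGe, Finset.filter_false_of_mem]
      · simp
      · intro S _ h
        have := Finset.card_le_univ S
        simp at this
        omega
    rw [this]; linarith
  | succ k ih =>
    intro d hd hn
    have h1 := ih (2 * d) (by omega) (by omega)
    have h2 := wApprox_tal f col hcol d hd
    have h3 : wGe n (toReal f) d = wApprox n (toReal f) d + wGe n (toReal f) (2 * d) := by
      rw [wApprox, wGe, wGe, ← Finset.sum_union]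
      · refine Finset.sum_congr ?_ fun _ _ => rfl
        ext S; simp only [Finset.mem_union, Finset.mem_filter, Finset.mem_univ, true_and]; omega
      · rw [Finset.disjoint_left]
        intro S; simp only [Finset.mem_filter, Finset.mem_univ, true_and]; omega
    have h4 : √((2 * d : ℕ) : ℝ) = √2 * √d := by push_cast; rw [Real.sqrt_mul (by norm_num)]
    rw [h4] at h1
    have h5 : (4/3 : ℝ) ≤ √2 := Real.le_sqrt_of_sq_le (by norm_num)
    have h6 : 0 ≤ wGe n (toReal f) (2 * d) := Finset.sum_nonneg fun _ _ => sq_nonneg _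
    have h7 : 0 ≤ √(d:ℝ) * wGe n (toReal f) (2 * d) := by positivity
    have h8 : (4/3 : ℝ) * (√(d:ℝ) * wGe n (toReal f) (2 * d)) ≤ 16 * talagrandCol f col := by
      refine le_trans (mul_le_mul_of_nonneg_right h5 h7) ?_
      rw [← mul_assoc]; exact h1
    rw [h3, mul_add]
    linarith

lemma key_d {n : ℕ} (f : (Fin n → Bool) → Bool) (hv : 0 < hcVar n f) (d : ℕ)
    (h : (4 * 6 ^ d) ^ 6 * (∑ i, influence n f i ^ 2) ≤ 1) :
    wLow n (toReal f) d ≤ hcVar n f / 2 := by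
  set M := ∑ i, influence n f i ^ 2
  have hM : 0 ≤ M := Finset.sum_nonneg fun _ _ => sq_nonneg _
  set v := hcVar n f
  set K : ℝ := 4 * 6 ^ d with hK
  have hK0 : 0 < K := by positivity
  have h1 : wLow n (toReal f) d ≤ 6 ^ d * √M := wLow_inf f d
  have h2 : wLow n (toReal f) d ≤ 3 ^ d * (2 * v * √v) := wLow_var f d
  by_cases hc : 2 * (6 ^ d * √M) ≤ v
  · linarith
  push Not at hc
  have hs : K ^ 3 * √M ≤ 1 := by
    refine abs_le_of_sq_le_sq' ?_ (by norm_num) |>.2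
    rw [mul_pow, Real.sq_sqrt hM, ← pow_mul]; simpa using h
  have h3 : K ^ 2 * v ≤ 1 := by
    have : v ≤ K * √M := by
      refine hc.le.trans ?_
      rw [hK]; nlinarith [Real.sqrt_nonneg M, pow_pos (by norm_num : (0:ℝ) < 6) d,
        mul_nonneg (pow_pos (by norm_num : (0:ℝ) < 6) d).le (Real.sqrt_nonneg M)]
    calc K ^ 2 * v ≤ K ^ 2 * (K * √M) := by gcongr
      _ = K ^ 3 * √M := by ring
      _ ≤ 1 := hs
  have h4 : K * √v ≤ 1 := by
    refine abs_le_of_sq_le_sq' ?_ (by norm_num) |>.2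
    rw [mul_pow, Real.sq_sqrt hv.le]; simpa using h3
  have h5 : (3:ℝ) ^ d ≤ 6 ^ d := pow_le_pow_left₀ (by norm_num) (by norm_num) d
  calc wLow n (toReal f) d ≤ 3 ^ d * (2 * v * √v) := h2
    _ ≤ 6 ^ d * (2 * v * √v) := by gcongr
    _ = (v / 2) * (K * √v) := by rw [hK]; ring
    _ ≤ (v / 2) * 1 := by gcongr
    _ = v / 2 := mul_one _

theorem robust_eldan_gross :
    ∃ c : ℝ, 0 < c ∧ ∀ (n : ℕ) (f : (Fin n → Bool) → Bool), 0 < hcVar n f →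
      ∀ col : (Fin n → Bool) → Fin n → Bool, colSymm col →
        talagrandCol f col ≥
          c * hcVar n f * Real.sqrt (Real.log (1 + 1 / ∑ i, (influence n f i) ^ 2)) := by
  refine ⟨1 / 320, by norm_num, fun n f hv col hcol => ?_⟩
  have hT := tal_nonneg f col
  set M := ∑ i, influence n f i ^ 2 with hMdef
  have hM : 0 ≤ M := Finset.sum_nonneg fun _ _ => sq_nonneg _
  rcases hM.eq_or_lt with h0 | hMpos
  · rw [← h0]; simpa using hT
  have hex : ∃ d : ℕ, 1 < (4 * 6 ^ (d + 2)) ^ 6 * M := by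
    obtain ⟨d, hd⟩ := pow_unbounded_of_one_lt (1 / M) (by norm_num : (1:ℝ) < 6)
    refine ⟨d, ?_⟩
    rw [div_lt_iff₀ hMpos] at hd
    refine hd.trans_le (mul_le_mul_of_nonneg_right ?_ hM)
    have h1 : (1:ℝ) ≤ 6 ^ d := one_le_pow₀ (by norm_num)
    have h2 : (6:ℝ) ^ d ≤ 4 * 6 ^ (d + 2) := by rw [pow_add]; linarith
    exact h2.trans (le_self_pow₀ (h1.trans h2) (by norm_num))
  classical
  obtain ⟨d, hd, hmin⟩ : ∃ d : ℕ, 1 < (4 * 6 ^ (d + 2)) ^ 6 * M ∧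
      (d = 0 ∨ (4 * 6 ^ (d + 1)) ^ 6 * M ≤ 1) := by
    refine ⟨Nat.find hex, Nat.find_spec hex, ?_⟩
    rcases Nat.eq_zero_or_pos (Nat.find hex) with h | h
    · exact Or.inl h
    · right
      have := Nat.find_min hex (m := Nat.find hex - 1) (by omega)
      rw [show Nat.find hex - 1 + 2 = Nat.find hex + 1 by omega] at this
      exact not_lt.mp this
  have hlow : wLow n (toReal f) (d + 1) ≤ hcVar n f / 2 := by
    rcases hmin with h | h
    · subst h
      have : wLow n (toReal f) (0 + 1) = 0 := by
        rw [wLow, Finset.filter_false_of_mem]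
        · simp
        · intro S _; omega
      rw [this]; linarith
    · exact key_d f hv (d + 1) h
  have hadd := wLow_add f (d + 1) (by omega)
  have hge : hcVar n f / 2 ≤ wGe n (toReal f) (d + 1) := by linarith
  have htal := wGe_tal f col hcol n (d + 1) (by omega) (by omega)
  set D : ℝ := ((d + 1 : ℕ) : ℝ) with hD
  have hD1 : (1:ℝ) ≤ D := by rw [hD]; push_cast; linarith [Nat.cast_nonneg (α := ℝ) d]
  have hlog : Real.log (1 + 1 / M) ≤ 100 * D := by
    rw [Real.log_le_iff_le_exp (by positivity)]
    have e6 : (6:ℝ) ≤ Real.exp 2 := by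
      have := Real.exp_one_gt_d9
      have h2 : Real.exp 2 = Real.exp 1 ^ 2 := by rw [← Real.exp_nat_mul]; norm_num
      rw [h2]; nlinarith
    have h1 : 1 / M ≤ (4 * 6 ^ (d + 2)) ^ 6 := by rw [div_le_iff₀ hMpos]; exact hd.le
    have h2 : (1:ℝ) + 1 / M ≤ 6 * 6 ^ (6 * (d + 3)) := by
      have h3 : (1:ℝ) ≤ 6 ^ (6 * (d + 3)) := one_le_pow₀ (by norm_num)
      have h4 : ((4:ℝ) * 6 ^ (d + 2)) ^ 6 ≤ 6 ^ (6 * (d + 3)) := by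
        rw [mul_comm 6, pow_mul]
        refine pow_le_pow_left₀ (by positivity) ?_ 6
        rw [show d + 3 = d + 2 + 1 by ring, pow_succ (6:ℝ) (d + 2)]
        nlinarith [pow_pos (by norm_num : (0:ℝ) < 6) (d + 2)]
      linarith
    refine h2.trans ?_
    rw [← pow_succ']
    refine (pow_le_pow_left₀ (by norm_num) e6 _).trans ?_
    rw [← Real.exp_nat_mul]
    refine Real.exp_le_exp.mpr ?_
    rw [hD]; push_cast; linarith [Nat.cast_nonneg (α := ℝ) d]
  have hsq : √(Real.log (1 + 1 / M)) ≤ 10 * √D := by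
    refine (Real.sqrt_le_sqrt hlog).trans (le_of_eq ?_)
    rw [Real.sqrt_mul (by norm_num), show (100:ℝ) = 10 ^ 2 by norm_num, Real.sqrt_sq (by norm_num)]
  have h1 : √D * (hcVar n f / 2) ≤ 16 * talagrandCol f col :=
    (mul_le_mul_of_nonneg_left hge (Real.sqrt_nonneg _)).trans htal
  have h2 : 1 / 320 * hcVar n f * √(Real.log (1 + 1 / M)) ≤ 1 / 320 * hcVar n f * (10 * √D) :=
    mul_le_mul_of_nonneg_left hsq (by positivity)
  have : 1 / 320 * hcVar n f * (10 * √D) = (√D * (hcVar n f / 2)) / 16 := by ring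
  rw [ge_iff_le]
  linarith

end
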